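/- The set of values taken by the integrated density of states on the gaps of the spectrum equals the gap label set: {N_b(x) : x ∈ (0,2) \ J_b} = G_b. -/

import Mathlib

open Set MeasureTheory

/-- The spectral decimation function `R_b`. -/
noncomputable def Rb (b : ℕ) : ℝ → ℝ :=
  fun z => (z / (b : ℝ)) * (((b : ℝ) + 1) * z - (2 * (b : ℝ) + 1)) *
    (((b : ℝ) + 1) * z - ((b : ℝ) + 2))

/-- The exceptional set `E_b = {1/(b+1), (2b+1)/(b+1)}`. -/
noncomputable def Eb (b : ℕ) : Set ℝ :=
  {1 / ((b : ℝ) + 1), (2 * (b : ℝ) + 1) / ((b : ℝ) + 1)}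

/-- The `m`-th preimage set `P_m = {x : R_b^∘m(x) ∈ E_b}`. -/
noncomputable def Pm (b m : ℕ) : Set ℝ := {x : ℝ | (Rb b)^[m] x ∈ Eb b}

/-- The density of states `ν_b = Σ_m ((b−1)/(2(b+2)^{m+1})) Σ_{λ ∈ P_m} δ_λ`. -/
noncomputable def nub (b : ℕ) : Measure ℝ :=
  Measure.sum fun m : ℕ =>
    ENNReal.ofReal (((b : ℝ) - 1) / (2 * ((b : ℝ) + 2) ^ (m + 1))) •
      Measure.sum fun lam : Pm b m => Measure.dirac (lam : ℝ)

/-- The integrated density of states `N_b(x) = ν_b((−∞, x])`. -/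
noncomputable def Nb (b : ℕ) (x : ℝ) : ℝ := (nub b (Iic x)).toReal

/-- `J_b`, the closure of `⋃_{m≥0} P_m`: the Julia set of `R_b`, which equals the
spectrum of the probabilistic Laplacian on the infinite bubble-diamond graph. -/
noncomputable def Jb (b : ℕ) : Set ℝ := closure (⋃ m : ℕ, Pm b m)

/-- The gap label set
`G_b = {(b+1+2w_k)/(2(b+2)^k) + ((b+1)/2)·Σ_{j=1}^{k−1} w_j/(b+2)^j}` over all `k ≥ 1`,
`w_1,…,w_{k−1} ∈ {0,1,2}`, `w_k ∈ {0,1}`. -/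
noncomputable def Gb (b : ℕ) : Set ℝ :=
  {y : ℝ | ∃ (k : ℕ) (w : ℕ → ℕ), 1 ≤ k ∧
    (∀ j : ℕ, 1 ≤ j → j ≤ k - 1 → w j ∈ ({0, 1, 2} : Set ℕ)) ∧
    w k ∈ ({0, 1} : Set ℕ) ∧
    y = ((b : ℝ) + 1 + 2 * (w k : ℝ)) / (2 * ((b : ℝ) + 2) ^ k) +
      (((b : ℝ) + 1) / 2) * ∑ j ∈ Finset.Icc 1 (k - 1), (w j : ℝ) / ((b : ℝ) + 2) ^ j}


/-- The three branch intervals. -/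
def I0 (b : ℕ) : Set ℝ := Icc 0 (1 / ((b : ℝ) + 1))
def I1 (b : ℕ) : Set ℝ := Icc ((b : ℝ) / ((b : ℝ) + 1)) (((b : ℝ) + 2) / ((b : ℝ) + 1))
def I2 (b : ℕ) : Set ℝ := Icc ((2 * (b : ℝ) + 1) / ((b : ℝ) + 1)) 2

section dynam
variable {b : ℕ}

lemma Rb_continuous (b : ℕ) : Continuous (Rb b) := by unfold Rb; fun_prop

lemma mem_I0 {x : ℝ} : x ∈ I0 b ↔ 0 ≤ x ∧ ((b : ℝ) + 1) * x ≤ 1 := by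
  have : (0 : ℝ) < (b : ℝ) + 1 := by positivity
  rw [I0, mem_Icc, le_div_iff₀ this, mul_comm]
lemma mem_I1 {x : ℝ} : x ∈ I1 b ↔ (b : ℝ) ≤ ((b : ℝ) + 1) * x ∧ ((b : ℝ) + 1) * x ≤ b + 2 := by
  have : (0 : ℝ) < (b : ℝ) + 1 := by positivity
  rw [I1, mem_Icc, le_div_iff₀ this, div_le_iff₀ this, mul_comm]
lemma mem_I2 {x : ℝ} : x ∈ I2 b ↔ 2 * (b : ℝ) + 1 ≤ ((b : ℝ) + 1) * x ∧ x ≤ 2 := by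
  have : (0 : ℝ) < (b : ℝ) + 1 := by positivity
  rw [I2, mem_Icc, div_le_iff₀ this, mul_comm x]

lemma Rb_sub (hb : 2 ≤ b) (x y : ℝ) : Rb b y - Rb b x = (y - x) *
    (((((b : ℝ) + 1) * (y - 1)) ^ 2 + (((b : ℝ) + 1) * (y - 1)) * (((b : ℝ) + 1) * (x - 1))
      + (((b : ℝ) + 1) * (x - 1)) ^ 2 - (b ^ 2 + b + 1)) / b) := by
  have : (b : ℝ) ≠ 0 := by positivity
  unfold Rb; field_simp; ring

lemma Rb_two_sub (hb : 2 ≤ b) (x : ℝ) : Rb b x - 2 =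
    (x - 2) * (((b : ℝ) + 1) * x - b) * (((b : ℝ) + 1) * x - 1) / b := by
  have : (b : ℝ) ≠ 0 := by positivity
  unfold Rb; field_simp; ring

lemma hbR (hb : 2 ≤ b) : (2 : ℝ) ≤ b := by exact_mod_cast hb

lemma exp_outer (hb : 2 ≤ b) {x y : ℝ} (h : (x ∈ I0 b ∧ y ∈ I0 b) ∨ (x ∈ I2 b ∧ y ∈ I2 b))
    (hxy : x ≤ y) : 2 * (y - x) ≤ Rb b y - Rb b x := by
  have h2 := hbR hb
  rw [Rb_sub hb, mul_comm]
  apply mul_le_mul_of_nonneg_left _ (by linarith)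
  rw [le_div_iff₀ (by linarith)]
  simp only [mem_I0, mem_I2] at h
  set u := ((b : ℝ) + 1) * (y - 1) with hu
  set v := ((b : ℝ) + 1) * (x - 1) with hv
  have : (u ≤ -b ∧ v ≤ -b) ∨ ((b : ℝ) ≤ u ∧ (b : ℝ) ≤ v) := by
    rcases h with h | h
    · left; constructor <;> linarith
    · right; constructor <;> linarith
  rcases this with ⟨h3, h4⟩ | ⟨h3, h4⟩
  · nlinarith [mul_nonneg (by linarith : 0 ≤ -b - u) (by linarith : 0 ≤ -b - v)]
  · nlinarith [mul_nonneg (by linarith : 0 ≤ u - b) (by linarith : 0 ≤ v - b)]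

lemma exp_inner (hb : 2 ≤ b) {x y : ℝ} (hx : x ∈ I1 b) (hy : y ∈ I1 b)
    (hxy : x ≤ y) : 2 * (y - x) ≤ Rb b x - Rb b y := by
  have h2 := hbR hb
  rw [← neg_sub (Rb b y), Rb_sub hb, mul_comm, ← mul_neg]
  apply mul_le_mul_of_nonneg_left _ (by linarith)
  rw [le_neg, div_le_iff₀ (by linarith)]
  simp only [mem_I1] at hx hy
  set u := ((b : ℝ) + 1) * (y - 1) with hu
  set v := ((b : ℝ) + 1) * (x - 1) with hv
  have h3 : u ^ 2 ≤ 1 := by apply (sq_le_one_iff_abs_le_one u).2; rw [abs_le]; constructor <;> linarith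
  have h4 : v ^ 2 ≤ 1 := by apply (sq_le_one_iff_abs_le_one v).2; rw [abs_le]; constructor <;> linarith
  nlinarith [sq_nonneg (u - v)]

lemma R_zero (b : ℕ) : Rb b 0 = 0 := by simp [Rb]
lemma R_two (hb : 2 ≤ b) : Rb b 2 = 2 := by have := Rb_two_sub hb 2; simp at this; linarith
lemma R_e1 (hb : 2 ≤ b) : Rb b (1 / ((b : ℝ) + 1)) = 2 := by
  have := Rb_two_sub hb (1 / ((b : ℝ) + 1))
  have h : (b : ℝ) + 1 ≠ 0 := by positivity
  rw [mul_div_cancel₀ _ h] at this; simp at this; simp; linarith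
lemma R_e2 (b : ℕ) : Rb b ((2 * (b : ℝ) + 1) / ((b : ℝ) + 1)) = 0 := by
  have h : (b : ℝ) + 1 ≠ 0 := by positivity
  unfold Rb; rw [mul_div_cancel₀ _ h]; simp
lemma R_a1 (hb : 2 ≤ b) : Rb b ((b : ℝ) / ((b : ℝ) + 1)) = 2 := by
  have := Rb_two_sub hb ((b : ℝ) / ((b : ℝ) + 1))
  have h : (b : ℝ) + 1 ≠ 0 := by positivity
  rw [mul_div_cancel₀ _ h] at this; simp at this; linarith
lemma R_a2 (b : ℕ) : Rb b (((b : ℝ) + 2) / ((b : ℝ) + 1)) = 0 := by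
  have h : (b : ℝ) + 1 ≠ 0 := by positivity
  unfold Rb; rw [mul_div_cancel₀ _ h]; simp

lemma I0_le (b : ℕ) : (0 : ℝ) ≤ 1 / ((b : ℝ) + 1) := by positivity
lemma I1_le (b : ℕ) : (b : ℝ) / ((b : ℝ) + 1) ≤ ((b : ℝ) + 2) / ((b : ℝ) + 1) := by gcongr; linarith
lemma I2_le (b : ℕ) : (2 * (b : ℝ) + 1) / ((b : ℝ) + 1) ≤ 2 := by
  rw [div_le_iff₀ (by positivity)]; linarith

lemma mono0 (hb : 2 ≤ b) : StrictMonoOn (Rb b) (I0 b) := fun x hx y hy h => by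
  have := exp_outer hb (.inl ⟨hx, hy⟩) h.le; linarith
lemma mono2 (hb : 2 ≤ b) : StrictMonoOn (Rb b) (I2 b) := fun x hx y hy h => by
  have := exp_outer hb (.inr ⟨hx, hy⟩) h.le; linarith
lemma anti1 (hb : 2 ≤ b) : StrictAntiOn (Rb b) (I1 b) := fun x hx y hy h => by
  have := exp_inner hb hx hy h.le; linarith

lemma bij0 (hb : 2 ≤ b) : BijOn (Rb b) (I0 b) (Icc 0 2) := by
  refine ⟨fun x hx => ?_, (mono0 hb).injOn, ?_⟩
  · have h1 := (mono0 hb).monotoneOn (left_mem_Icc.2 (I0_le b)) hx hx.1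
    have h2 := (mono0 hb).monotoneOn hx (right_mem_Icc.2 (I0_le b)) hx.2
    rw [R_zero] at h1; rw [R_e1 hb] at h2; exact ⟨h1, h2⟩
  · have := intermediate_value_Icc (I0_le b) (Rb_continuous b).continuousOn
    rwa [R_zero, R_e1 hb] at this
lemma bij1 (hb : 2 ≤ b) : BijOn (Rb b) (I1 b) (Icc 0 2) := by
  refine ⟨fun x hx => ?_, (anti1 hb).injOn, ?_⟩
  · have h1 := (anti1 hb).antitoneOn (left_mem_Icc.2 (I1_le b)) hx hx.1
    have h2 := (anti1 hb).antitoneOn hx (right_mem_Icc.2 (I1_le b)) hx.2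
    rw [R_a1 hb] at h1; rw [R_a2] at h2; exact ⟨h2, h1⟩
  · have := intermediate_value_Icc' (I1_le b) (Rb_continuous b).continuousOn
    rwa [R_a1 hb, R_a2] at this
lemma bij2 (hb : 2 ≤ b) : BijOn (Rb b) (I2 b) (Icc 0 2) := by
  refine ⟨fun x hx => ?_, (mono2 hb).injOn, ?_⟩
  · have h1 := (mono2 hb).monotoneOn (left_mem_Icc.2 (I2_le b)) hx hx.1
    have h2 := (mono2 hb).monotoneOn hx (right_mem_Icc.2 (I2_le b)) hx.2
    rw [R_e2] at h1; rw [R_two hb] at h2; exact ⟨h1, h2⟩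
  · have := intermediate_value_Icc (I2_le b) (Rb_continuous b).continuousOn
    rwa [R_e2, R_two hb] at this

lemma I_sub (hb : 2 ≤ b) : I0 b ∪ I1 b ∪ I2 b ⊆ Icc 0 2 := by
  have h2 := hbR hb
  rintro x ((h | h) | h)
  · rw [mem_I0] at h; exact ⟨h.1, by nlinarith⟩
  · rw [mem_I1] at h; constructor <;> nlinarith
  · rw [mem_I2] at h; constructor <;> nlinarith

/-- preimage of `[0,2]` lies in the three branches -/
lemma cover (hb : 2 ≤ b) {x : ℝ} (h : Rb b x ∈ Icc (0 : ℝ) 2) : x ∈ I0 b ∪ I1 b ∪ I2 b := by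
  have h2 := hbR hb
  have hb0 : (0 : ℝ) < b := by linarith
  have e := Rb_two_sub hb x
  by_contra hc
  simp only [mem_union, mem_I0, mem_I1, mem_I2, not_or, not_and, not_le] at hc
  obtain ⟨⟨c0, c1⟩, c2⟩ := hc
  set t := ((b : ℝ) + 1) * x with ht
  have e' : (Rb b x - 2) * b = (x - 2) * (t - b) * (t - 1) := by rw [e]; field_simp
  have e3 : Rb b x * b = x * (t - (2 * b + 1)) * (t - (b + 2)) := by unfold Rb; field_simp; ring
  have p1 : 0 ≤ Rb b x * b := mul_nonneg h.1 hb0.le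
  have p2 : (Rb b x - 2) * b ≤ 0 := by nlinarith [h.2]
  rcases lt_or_ge x 0 with hx | hx
  · have : t < 0 := by nlinarith
    have : 0 < (t - (2 * b + 1)) * (t - (b + 2)) := mul_pos_of_neg_of_neg (by linarith) (by linarith)
    nlinarith
  have c0 := c0 hx
  rcases lt_or_ge t b with hb1 | hb1
  · have q : x < 2 := by nlinarith
    have := mul_pos (mul_pos_of_neg_of_neg (by linarith : x - 2 < 0) (by linarith : t - b < 0))
      (by linarith : 0 < t - 1)
    linarith
  have c1 := c1 hb1
  rcases lt_or_ge t (2 * b + 1) with hb3 | hb3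
  · have hx0 : 0 < x := by nlinarith
    have := mul_neg_of_neg_of_pos (mul_neg_of_pos_of_neg hx0 (by linarith : t - (2 * b + 1) < 0))
      (by linarith : 0 < t - (b + 2))
    linarith
  have c2 := c2 hb3
  have := mul_pos (mul_pos (by linarith : 0 < x - 2) (by linarith : 0 < t - b))
      (by linarith : 0 < t - 1)
  linarith

lemma R_mem_imp (hb : 2 ≤ b) {x : ℝ} (h : Rb b x ∈ Icc (0 : ℝ) 2) : x ∈ Icc (0 : ℝ) 2 :=
  I_sub hb (cover hb h)

lemma e1_mem (_hb : 2 ≤ b) : 1 / ((b : ℝ) + 1) ∈ I0 b := right_mem_Icc.2 (I0_le b)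
lemma e2_mem (_hb : 2 ≤ b) : (2 * (b : ℝ) + 1) / ((b : ℝ) + 1) ∈ I2 b := left_mem_Icc.2 (I2_le b)

lemma Pm_succ (b m : ℕ) (x : ℝ) : x ∈ Pm b (m + 1) ↔ Rb b x ∈ Pm b m := by
  simp [Pm, Function.iterate_succ_apply]
lemma Pm_zero (b : ℕ) : Pm b 0 = Eb b := by ext x; simp [Pm]

lemma Pm_sub (hb : 2 ≤ b) (m : ℕ) : Pm b m ⊆ I0 b ∪ I1 b ∪ I2 b := by
  induction m with
  | zero =>
    rw [Pm_zero]
    rintro x (rfl | rfl)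
    · exact .inl (.inl (e1_mem hb))
    · exact .inr (e2_mem hb)
  | succ m ih => intro x hx; exact cover hb (I_sub hb (ih ((Pm_succ b m x).1 hx)))

/-- The filled set. -/
def Kb (b : ℕ) : Set ℝ := {x | ∀ n, (Rb b)^[n] x ∈ Icc (0 : ℝ) 2}

lemma Kb_closed (b : ℕ) : IsClosed (Kb b) := by
  have : Kb b = ⋂ n, (Rb b)^[n] ⁻¹' Icc (0 : ℝ) 2 := by ext; simp [Kb]
  rw [this]
  exact isClosed_iInter fun n => isClosed_Icc.preimage ((Rb_continuous b).iterate n)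

lemma Kb_iff (hb : 2 ≤ b) (x : ℝ) : x ∈ Kb b ↔ Rb b x ∈ Kb b := by
  constructor
  · intro h n; have := h (n + 1); rwa [Function.iterate_succ_apply] at this
  · intro h n
    cases n with
    | zero => exact R_mem_imp hb (h 0)
    | succ n => rw [Function.iterate_succ_apply]; exact h n

lemma zero_mem_K (b : ℕ) : (0 : ℝ) ∈ Kb b := fun n => by
  rw [Function.iterate_fixed (R_zero b)]; simp
lemma two_mem_K (hb : 2 ≤ b) : (2 : ℝ) ∈ Kb b := fun n => by
  rw [Function.iterate_fixed (R_two hb)]; simp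

lemma Pm_sub_K (hb : 2 ≤ b) (m : ℕ) : Pm b m ⊆ Kb b := by
  induction m with
  | zero =>
    rw [Pm_zero]
    rintro x (rfl | rfl) <;> rw [Kb_iff hb]
    · rw [R_e1 hb]; exact two_mem_K hb
    · rw [R_e2]; exact zero_mem_K b
  | succ m ih => intro x hx; rw [Kb_iff hb]; exact ih ((Pm_succ b m x).1 hx)

lemma approx (hb : 2 ≤ b) (n : ℕ) : ∀ x ∈ Kb b, ∃ p ∈ Pm b n, |x - p| ≤ 2 * (1 / 2) ^ n := by
  induction n with
  | zero =>
    intro x hx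
    refine ⟨1 / ((b : ℝ) + 1), by rw [Pm_zero]; exact .inl rfl, ?_⟩
    have h1 := hx 0
    have h2 := I_sub hb (.inl (.inl (e1_mem hb)))
    simp only [Function.iterate_zero, id, mem_Icc] at h1 h2
    rw [abs_le, pow_zero]; constructor <;> linarith [h1.1, h1.2, h2.1, h2.2]
  | succ n ih =>
    intro x hx
    obtain ⟨p', hp', hd⟩ := ih _ ((Kb_iff hb x).1 hx)
    have hp2 : p' ∈ Icc (0 : ℝ) 2 := I_sub hb (Pm_sub hb n hp')
    have key : ∀ p, Rb b p = p' → 2 * |x - p| ≤ |Rb b x - Rb b p| →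
        ∃ p ∈ Pm b (n + 1), |x - p| ≤ 2 * (1 / 2) ^ (n + 1) := by
      intro p h1 h2
      refine ⟨p, by rw [Pm_succ, h1]; exact hp', ?_⟩
      rw [h1] at h2; rw [pow_succ]; linarith
    have hx1 := (Kb_iff hb x).1 hx 0
    rcases cover hb hx1 with (h | h) | h
    · obtain ⟨p, hp, e⟩ := (bij0 hb).surjOn hp2
      refine key p e ?_
      rcases le_total x p with hl | hl
      · have := exp_outer hb (.inl ⟨h, hp⟩) hl
        rw [abs_sub_comm, abs_of_nonneg (by linarith), abs_sub_comm]; exact this.trans (le_abs_self _)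
      · have := exp_outer hb (.inl ⟨hp, h⟩) hl
        rw [abs_of_nonneg (by linarith)]; exact this.trans (le_abs_self _)
    · obtain ⟨p, hp, e⟩ := (bij1 hb).surjOn hp2
      refine key p e ?_
      rcases le_total x p with hl | hl
      · have := exp_inner hb h hp hl
        rw [abs_sub_comm, abs_of_nonneg (by linarith)]; exact this.trans (le_abs_self _)
      · have := exp_inner hb hp h hl
        rw [abs_of_nonneg (by linarith), abs_sub_comm]; exact this.trans (le_abs_self _)
    · obtain ⟨p, hp, e⟩ := (bij2 hb).surjOn hp2
      refine key p e ?_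
      rcases le_total x p with hl | hl
      · have := exp_outer hb (.inr ⟨h, hp⟩) hl
        rw [abs_sub_comm, abs_of_nonneg (by linarith), abs_sub_comm]; exact this.trans (le_abs_self _)
      · have := exp_outer hb (.inr ⟨hp, h⟩) hl
        rw [abs_of_nonneg (by linarith)]; exact this.trans (le_abs_self _)

lemma Jb_eq (hb : 2 ≤ b) : Jb b = Kb b := by
  apply subset_antisymm
  · exact closure_minimal (iUnion_subset (Pm_sub_K hb)) (Kb_closed b)
  · intro x hx
    rw [Jb, Metric.mem_closure_iff]
    intro ε hε
    obtain ⟨n, hn⟩ := exists_pow_lt_of_lt_one (half_pos hε) (by norm_num : (1 / 2 : ℝ) < 1)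
    obtain ⟨p, hp, hd⟩ := approx hb n x hx
    exact ⟨p, mem_iUnion.2 ⟨n, hp⟩, by rw [Real.dist_eq]; linarith⟩

end dynam

section meas
variable {b : ℕ}

lemma nub_apply (b : ℕ) {A : Set ℝ} (hA : MeasurableSet A) :
    nub b A = ∑' m : ℕ, ENNReal.ofReal (((b : ℝ) - 1) / (2 * ((b : ℝ) + 2) ^ (m + 1))) *
      ((Pm b m ∩ A).encard : ENNReal) := by
  rw [nub, Measure.sum_apply _ hA]
  congr 1; ext m
  rw [Measure.smul_apply, Measure.sum_apply _ hA, smul_eq_mul]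
  congr 1
  simp_rw [Measure.dirac_apply' _ hA]
  rw [← ENNReal.tsum_set_one, tsum_subtype (Pm b m) (A.indicator 1), tsum_subtype (Pm b m ∩ A) (fun _ => 1),
    ← indicator_indicator]
  rfl

lemma nub_congr {A B : Set ℝ} (hA : MeasurableSet A) (hB : MeasurableSet B)
    (h : ∀ m, ∀ x ∈ Pm b m, x ∈ A ↔ x ∈ B) : nub b A = nub b B := by
  rw [nub_apply b hA, nub_apply b hB]
  congr 1; ext m
  have : Pm b m ∩ A = Pm b m ∩ B := by
    ext x; simp only [mem_inter_iff]; exact and_congr_right (h m x)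
  rw [this]

lemma enc_branch {I A B : Set ℝ} (hI : BijOn (Rb b) I (Icc 0 2))
    (hAI : A ⊆ I) (hB : B ⊆ Icc 0 2) (h : ∀ z ∈ I, z ∈ A ↔ Rb b z ∈ B) (m : ℕ) :
    (Pm b (m + 1) ∩ A).encard = (Pm b m ∩ B).encard := by
  have : Rb b '' (Pm b (m + 1) ∩ A) = Pm b m ∩ B := by
    ext y; constructor
    · rintro ⟨x, ⟨hx, hxA⟩, rfl⟩
      exact ⟨(Pm_succ b m x).1 hx, (h x (hAI hxA)).1 hxA⟩
    · rintro ⟨hy, hyB⟩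
      obtain ⟨x, hx, rfl⟩ := hI.surjOn (hB hyB)
      exact ⟨x, ⟨(Pm_succ b m x).2 hy, (h x hx).2 hyB⟩, rfl⟩
  rw [← this, InjOn.encard_image]
  exact hI.injOn.mono (inter_subset_right.trans hAI)

lemma nu_branch (hb : 2 ≤ b) {I A B : Set ℝ} (hI : BijOn (Rb b) I (Icc 0 2))
    (hAI : A ⊆ I) (hB : B ⊆ Icc 0 2) (h : ∀ z ∈ I, z ∈ A ↔ Rb b z ∈ B)
    (mA : MeasurableSet A) (mB : MeasurableSet B) (e : ℕ) (he : (Eb b ∩ A).encard = e) :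
    nub b A = ENNReal.ofReal (((b : ℝ) - 1) / (2 * ((b : ℝ) + 2))) * e +
      ENNReal.ofReal (1 / ((b : ℝ) + 2)) * nub b B := by
  have h2 := hbR hb
  rw [nub_apply b mA, tsum_eq_zero_add' ENNReal.summable, nub_apply b mB, ← ENNReal.tsum_mul_left]
  congr 1
  · rw [Pm_zero, he]; simp
  · congr 1; ext m
    rw [enc_branch hI hAI hB h, ← mul_assoc, ← ENNReal.ofReal_mul (by positivity)]
    congr 2
    field_simp
    ring

lemma meas_I0 : MeasurableSet (I0 b) := measurableSet_Icc
lemma meas_I1 : MeasurableSet (I1 b) := measurableSet_Icc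
lemma meas_I2 : MeasurableSet (I2 b) := measurableSet_Icc

lemma lt01 (hb : 2 ≤ b) {x y : ℝ} (hx : x ∈ I0 b) (hy : y ∈ I1 b) : x < y := by
  have h2 := hbR hb
  rw [mem_I0] at hx; rw [mem_I1] at hy; by_contra hc; nlinarith
lemma lt12 (hb : 2 ≤ b) {x y : ℝ} (hx : x ∈ I1 b) (hy : y ∈ I2 b) : x < y := by
  have h2 := hbR hb
  rw [mem_I1] at hx; rw [mem_I2] at hy; by_contra hc; nlinarith
lemma lt02 (hb : 2 ≤ b) {x y : ℝ} (hx : x ∈ I0 b) (hy : y ∈ I2 b) : x < y := by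
  have h2 := hbR hb
  rw [mem_I0] at hx; rw [mem_I2] at hy; by_contra hc; nlinarith

lemma disj01 (hb : 2 ≤ b) : Disjoint (I0 b) (I1 b) :=
  disjoint_left.2 fun _ h h' => lt_irrefl _ (lt01 hb h h')
lemma disj12 (hb : 2 ≤ b) : Disjoint (I1 b) (I2 b) :=
  disjoint_left.2 fun _ h h' => lt_irrefl _ (lt12 hb h h')
lemma disj02 (hb : 2 ≤ b) : Disjoint (I0 b) (I2 b) :=
  disjoint_left.2 fun _ h h' => lt_irrefl _ (lt02 hb h h')

lemma card_Pm (hb : 2 ≤ b) (m : ℕ) : (Pm b m).encard = (2 * 3 ^ m : ℕ) := by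
  induction m with
  | zero =>
    rw [Pm_zero, Eb, encard_pair]
    · rfl
    · exact (lt02 hb (e1_mem hb) (e2_mem hb)).ne
  | succ m ih =>
    have e : Pm b (m + 1) = (Pm b (m + 1) ∩ I0 b ∪ Pm b (m + 1) ∩ I1 b) ∪ Pm b (m + 1) ∩ I2 b := by
      rw [← inter_union_distrib_left, ← inter_union_distrib_left]
      exact (inter_eq_left.2 (Pm_sub hb _)).symm
    have f : Pm b m ∩ Icc 0 2 = Pm b m := inter_eq_left.2 ((Pm_sub hb _).trans (I_sub hb))
    rw [e, encard_union_eq, encard_union_eq,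
      enc_branch (bij0 hb) le_rfl le_rfl (fun z hz => iff_of_true hz ((bij0 hb).mapsTo hz)),
      enc_branch (bij1 hb) le_rfl le_rfl (fun z hz => iff_of_true hz ((bij1 hb).mapsTo hz)),
      enc_branch (bij2 hb) le_rfl le_rfl (fun z hz => iff_of_true hz ((bij2 hb).mapsTo hz)), f, ih]
    · norm_cast; ring
    · exact (disj01 hb).mono inter_subset_right inter_subset_right
    · exact ((disj02 hb).union_left (disj12 hb)).mono
        (union_subset_union inter_subset_right inter_subset_right) inter_subset_right

lemma nub_univ (hb : 2 ≤ b) : nub b univ = 1 := by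
  have h2 := hbR hb
  rw [nub_apply b .univ]
  have : ∀ m : ℕ, ENNReal.ofReal (((b : ℝ) - 1) / (2 * ((b : ℝ) + 2) ^ (m + 1))) *
      ((Pm b m ∩ univ).encard : ENNReal) =
      ENNReal.ofReal (((b : ℝ) - 1) / ((b : ℝ) + 2) * (3 / ((b : ℝ) + 2)) ^ m) := by
    intro m
    rw [inter_univ, card_Pm hb]
    have : (((2 * 3 ^ m : ℕ) : ℕ∞) : ENNReal) = ENNReal.ofReal (2 * 3 ^ m) := by
      rw [ENat.toENNReal_coe, ← ENNReal.ofReal_natCast]; push_cast; rfl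
    rw [this, ← ENNReal.ofReal_mul (by apply div_nonneg; linarith; positivity)]
    congr 1; rw [div_pow]; field_simp; ring
  simp_rw [this]
  have hr : 3 / ((b : ℝ) + 2) < 1 := by rw [div_lt_one (by positivity)]; linarith
  have hs := (hasSum_geometric_of_lt_one (by positivity : 0 ≤ 3 / ((b : ℝ) + 2)) hr).mul_left
    (((b : ℝ) - 1) / ((b : ℝ) + 2))
  rw [← ENNReal.ofReal_tsum_of_nonneg _ hs.summable, hs.tsum_eq]
  · have : (b : ℝ) - 1 ≠ 0 := by linarith
    have : (b : ℝ) + 2 ≠ 0 := by positivity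
    have e : 1 - 3 / ((b : ℝ) + 2) = (b - 1) / (b + 2) := by field_simp; ring
    rw [e, ENNReal.ofReal_eq_one]; field_simp
  · intro n; apply mul_nonneg; apply div_nonneg; linarith; positivity; positivity

lemma nub_prob (hb : 2 ≤ b) : IsProbabilityMeasure (nub b) := ⟨nub_univ hb⟩

lemma nu_real (hb : 2 ≤ b) {I A B : Set ℝ} (hI : BijOn (Rb b) I (Icc 0 2))
    (hAI : A ⊆ I) (hB : B ⊆ Icc 0 2) (h : ∀ z ∈ I, z ∈ A ↔ Rb b z ∈ B)
    (mA : MeasurableSet A) (mB : MeasurableSet B) (e : ℕ) (he : (Eb b ∩ A).encard = e) :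
    (nub b).real A = ((b : ℝ) - 1) / (2 * ((b : ℝ) + 2)) * e +
      1 / ((b : ℝ) + 2) * (nub b).real B := by
  have h2 := hbR hb
  have := nub_prob hb
  have h1 : 0 ≤ ((b : ℝ) - 1) / (2 * ((b : ℝ) + 2)) := by apply div_nonneg; linarith; positivity
  rw [Measure.real, nu_branch hb hI hAI hB h mA mB e he, ENNReal.toReal_add
    (ENNReal.mul_ne_top (by simp) (by simp)) (ENNReal.mul_ne_top (by simp) (measure_ne_top _ _)),
    ENNReal.toReal_mul, ENNReal.toReal_mul, ENNReal.toReal_ofReal h1,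
    ENNReal.toReal_ofReal (by positivity)]
  rfl

lemma Nb_split (hb : 2 ≤ b) (x : ℝ) : Nb b x =
    (nub b).real (I0 b ∩ Iic x) + (nub b).real (I1 b ∩ Iic x) + (nub b).real (I2 b ∩ Iic x) := by
  have := nub_prob hb
  have e : nub b (Iic x) = nub b ((I0 b ∩ Iic x ∪ I1 b ∩ Iic x) ∪ I2 b ∩ Iic x) := by
    apply nub_congr measurableSet_Iic
    · exact ((meas_I0.inter measurableSet_Iic).union (meas_I1.inter measurableSet_Iic)).union
        (meas_I2.inter measurableSet_Iic)
    · intro m y hy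
      rw [← union_inter_distrib_right, ← union_inter_distrib_right]
      exact ⟨fun h => ⟨Pm_sub hb m hy, h⟩, fun h => h.2⟩
  rw [Nb, e, ← Measure.real, measureReal_union, measureReal_union]
  · exact (disj01 hb).mono inter_subset_left inter_subset_left
  · exact meas_I1.inter measurableSet_Iic
  · exact ((disj02 hb).union_left (disj12 hb)).mono
        (union_subset_union inter_subset_left inter_subset_left) inter_subset_left
  · exact meas_I2.inter measurableSet_Iic

lemma E0 (hb : 2 ≤ b) {A : Set ℝ} (h : A ⊆ I0 b) (h1 : 1 / ((b : ℝ) + 1) ∈ A) :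
    (Eb b ∩ A).encard = (1 : ℕ) := by
  have : Eb b ∩ A = {1 / ((b : ℝ) + 1)} := by
    ext y; constructor
    · rintro ⟨rfl | rfl, hy⟩
      · rfl
      · exact absurd (lt02 hb (h hy) (e2_mem hb)) (lt_irrefl _)
    · rintro rfl; exact ⟨.inl rfl, h1⟩
  rw [this, encard_singleton]; rfl
lemma E2 (hb : 2 ≤ b) {A : Set ℝ} (h : A ⊆ I2 b) (h1 : (2 * (b : ℝ) + 1) / ((b : ℝ) + 1) ∈ A) :
    (Eb b ∩ A).encard = (1 : ℕ) := by
  have : Eb b ∩ A = {(2 * (b : ℝ) + 1) / ((b : ℝ) + 1)} := by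
    ext y; constructor
    · rintro ⟨rfl | rfl, hy⟩
      · exact absurd (lt02 hb (e1_mem hb) (h hy)) (lt_irrefl _)
      · rfl
    · rintro rfl; exact ⟨.inr rfl, h1⟩
  rw [this, encard_singleton]; rfl
lemma E1 (hb : 2 ≤ b) {A : Set ℝ} (h : A ⊆ I1 b) : (Eb b ∩ A).encard = (0 : ℕ) := by
  have : Eb b ∩ A = ∅ := by
    ext y; simp only [mem_empty_iff_false, iff_false]
    rintro ⟨rfl | rfl, hy⟩
    · exact lt_irrefl _ (lt01 hb (e1_mem hb) (h hy))
    · exact lt_irrefl _ (lt12 hb (h hy) (e2_mem hb))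
  rw [this]; simp
lemma E0' (hb : 2 ≤ b) {A : Set ℝ} (h : A ⊆ I0 b) (h1 : 1 / ((b : ℝ) + 1) ∉ A) :
    (Eb b ∩ A).encard = (0 : ℕ) := by
  have : Eb b ∩ A = ∅ := by
    ext y; simp only [mem_empty_iff_false, iff_false]
    rintro ⟨rfl | rfl, hy⟩
    · exact h1 hy
    · exact lt_irrefl _ (lt02 hb (h hy) (e2_mem hb))
  rw [this]; simp

lemma nu_Icc (hb : 2 ≤ b) : (nub b).real (Icc 0 2) = 1 := by
  rw [Measure.real, nub_congr (B := univ) measurableSet_Icc .univ, nub_univ hb]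
  · rfl
  · intro m x hx; exact iff_of_true (I_sub hb (Pm_sub hb m hx)) trivial

lemma nu_I0 (hb : 2 ≤ b) : (nub b).real (I0 b) = ((b : ℝ) + 1) / (2 * (b + 2)) := by
  rw [nu_real hb (bij0 hb) le_rfl le_rfl (fun z hz => iff_of_true hz ((bij0 hb).mapsTo hz))
    meas_I0 measurableSet_Icc 1 (E0 hb le_rfl (e1_mem hb)), nu_Icc hb]
  push_cast; field_simp; ring
lemma nu_I1 (hb : 2 ≤ b) : (nub b).real (I1 b) = 1 / ((b : ℝ) + 2) := by
  rw [nu_real hb (bij1 hb) le_rfl le_rfl (fun z hz => iff_of_true hz ((bij1 hb).mapsTo hz))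
    meas_I1 measurableSet_Icc 0 (E1 hb le_rfl), nu_Icc hb]
  push_cast; ring

lemma Iic_full {I : Set ℝ} {x : ℝ} (h : ∀ y ∈ I, y ≤ x) : I ∩ Iic x = I := inter_eq_left.2 h
lemma Iic_empty {I : Set ℝ} {x : ℝ} (h : ∀ y ∈ I, x < y) : I ∩ Iic x = ∅ := by
  ext y; simp only [mem_inter_iff, mem_empty_iff_false, iff_false, not_and]
  intro hy h'; exact absurd (h y hy) (not_lt.2 h')

lemma N_gap1 (hb : 2 ≤ b) {x : ℝ} (h1 : 1 < ((b : ℝ) + 1) * x) (h2 : ((b : ℝ) + 1) * x < b) :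
    Nb b x = ((b : ℝ) + 1) / (2 * (b + 2)) := by
  have h0 := hbR hb
  rw [Nb_split hb, Iic_full, Iic_empty (I := I1 b), Iic_empty (I := I2 b), nu_I0 hb]
  · simp
  · intro y hy; rw [mem_I2] at hy; by_contra hc; nlinarith
  · intro y hy; rw [mem_I1] at hy; by_contra hc; nlinarith
  · intro y hy; rw [mem_I0] at hy; by_contra hc; nlinarith

lemma N_gap2 (hb : 2 ≤ b) {x : ℝ} (h1 : (b : ℝ) + 2 < ((b : ℝ) + 1) * x)
    (h2 : ((b : ℝ) + 1) * x < 2 * b + 1) :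
    Nb b x = ((b : ℝ) + 3) / (2 * (b + 2)) := by
  have h0 := hbR hb
  rw [Nb_split hb, Iic_full, Iic_full (I := I1 b), Iic_empty (I := I2 b), nu_I0 hb, nu_I1 hb]
  · simp; field_simp; ring
  · intro y hy; rw [mem_I2] at hy; by_contra hc; nlinarith
  · intro y hy; rw [mem_I1] at hy; by_contra hc; nlinarith
  · intro y hy; rw [mem_I0] at hy; by_contra hc; nlinarith

lemma nu_0y (hb : 2 ≤ b) (y : ℝ) : (nub b).real (Icc 0 y) = Nb b y := by
  rw [Measure.real, nub_congr measurableSet_Icc (B := Iic y) measurableSet_Iic]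
  · rfl
  · intro m x hx
    exact ⟨fun h => h.2, fun h => ⟨(I_sub hb (Pm_sub hb m hx)).1, h⟩⟩

lemma nu_y2 (hb : 2 ≤ b) {y : ℝ} (hy : y ∉ Jb b) : (nub b).real (Icc y 2) = 1 - Nb b y := by
  have := nub_prob hb
  have h := probReal_compl_eq_one_sub (μ := nub b) (measurableSet_Iic (a := y))
  have h' : Nb b y = (nub b).real (Iic y) := rfl
  rw [h', ← h, Measure.real, nub_congr measurableSet_Icc (B := (Iic y)ᶜ) measurableSet_Iic.compl]
  · rfl
  · intro m x hx
    have hne : y ≠ x := by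
      rintro rfl; exact hy (subset_closure (mem_iUnion.2 ⟨m, hx⟩))
    simp only [mem_Icc, mem_compl_iff, mem_Iic, not_le]
    exact ⟨fun h => lt_of_le_of_ne h.1 hne, fun h => ⟨h.le, (I_sub hb (Pm_sub hb m hx)).2⟩⟩

lemma N_b0 (hb : 2 ≤ b) {x : ℝ} (hx : x ∈ I0 b) (hy : Rb b x < 2) :
    Nb b x = Nb b (Rb b x) / (b + 2) := by
  have hR := (bij0 hb).mapsTo hx
  rw [Nb_split hb, Iic_empty (I := I1 b) (fun y hy => lt01 hb hx hy),
    Iic_empty (I := I2 b) (fun y hy => lt02 hb hx hy),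
    nu_real hb (bij0 hb) (B := Icc 0 (Rb b x)) inter_subset_left (Icc_subset_Icc le_rfl hR.2) ?_
      (meas_I0.inter measurableSet_Iic) measurableSet_Icc 0 (E0' hb inter_subset_left ?_),
    nu_0y hb]
  · simp; field_simp
  · intro z hz
    simp only [mem_inter_iff, hz, true_and, mem_Iic, mem_Icc, ((bij0 hb).mapsTo hz).1]
    exact ((mono0 hb).le_iff_le hz hx).symm
  · rintro ⟨h, h'⟩
    have := (mono0 hb).monotoneOn h hx h'
    rw [R_e1 hb] at this; linarith

lemma N_b2 (hb : 2 ≤ b) {x : ℝ} (hx : x ∈ I2 b) :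
    Nb b x = ((b : ℝ) + 1) / (b + 2) + Nb b (Rb b x) / (b + 2) := by
  have hR := (bij2 hb).mapsTo hx
  rw [Nb_split hb, Iic_full (I := I0 b) (fun y hy => (lt02 hb hy hx).le),
    Iic_full (I := I1 b) (fun y hy => (lt12 hb hy hx).le), nu_I0 hb, nu_I1 hb,
    nu_real hb (bij2 hb) (B := Icc 0 (Rb b x)) inter_subset_left (Icc_subset_Icc le_rfl hR.2) ?_
      (meas_I2.inter measurableSet_Iic) measurableSet_Icc 1
      (E2 hb inter_subset_left ⟨e2_mem hb, hx.1⟩),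
    nu_0y hb]
  · push_cast; field_simp; ring
  · intro z hz
    simp only [mem_inter_iff, hz, true_and, mem_Iic, mem_Icc, ((bij2 hb).mapsTo hz).1]
    exact ((mono2 hb).le_iff_le hz hx).symm

lemma N_b1 (hb : 2 ≤ b) {x : ℝ} (hx : x ∈ I1 b) (hy : Rb b x ∉ Jb b) :
    Nb b x = ((b : ℝ) + 1) / (2 * (b + 2)) + (1 - Nb b (Rb b x)) / (b + 2) := by
  have hR := (bij1 hb).mapsTo hx
  rw [Nb_split hb, Iic_full (I := I0 b) (fun y hy => (lt01 hb hy hx).le),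
    Iic_empty (I := I2 b) (fun y hy => lt12 hb hx hy), nu_I0 hb,
    nu_real hb (bij1 hb) (B := Icc (Rb b x) 2) inter_subset_left (Icc_subset_Icc hR.1 le_rfl) ?_
      (meas_I1.inter measurableSet_Iic) measurableSet_Icc 0
      (E1 hb inter_subset_left),
    nu_y2 hb hy]
  · simp; field_simp
  · intro z hz
    simp only [mem_inter_iff, hz, true_and, mem_Iic, mem_Icc, ((bij1 hb).mapsTo hz).2, and_true]
    exact ((anti1 hb).le_iff_ge hx hz).symm

end meas

section labels

/-- Recursive description of the labels. -/
inductive Lab (b : ℕ) : ℝ → Prop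
  | base0 : Lab b (((b : ℝ) + 1) / (2 * (b + 2)))
  | base1 : Lab b (((b : ℝ) + 3) / (2 * (b + 2)))
  | step0 (h : ℝ) : Lab b h → Lab b (h / (b + 2))
  | step1 (h : ℝ) : Lab b h → Lab b (((b : ℝ) + 1) / (2 * (b + 2)) + h / (b + 2))
  | step2 (h : ℝ) : Lab b h → Lab b (((b : ℝ) + 1) / (b + 2) + h / (b + 2))

lemma Lab_symm {b : ℕ} {g : ℝ} (h : Lab b g) : Lab b (1 - g) := by
  induction h with
  | base0 => convert Lab.base1 using 1; field_simp; ring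
  | base1 => convert Lab.base0 using 1; field_simp; ring
  | step0 h _ ih => convert Lab.step2 _ ih using 1; field_simp; ring
  | step1 h _ ih => convert Lab.step1 _ ih using 1; field_simp; ring
  | step2 h _ ih => convert Lab.step0 _ ih using 1; field_simp; ring

/-- value of a label word of length `k+1`, indexed from `0`. -/
noncomputable def val (b k : ℕ) (w : ℕ → ℕ) : ℝ :=
  ((b : ℝ) + 1 + 2 * (w k : ℝ)) / (2 * ((b : ℝ) + 2) ^ (k + 1)) +
    (((b : ℝ) + 1) / 2) * ∑ j ∈ Finset.range k, (w j : ℝ) / ((b : ℝ) + 2) ^ (j + 1)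

lemma val_succ (b k : ℕ) (w : ℕ → ℕ) : val b (k + 1) w =
    ((b : ℝ) + 1) / 2 * w 0 / (b + 2) + val b k (fun j => w (j + 1)) / (b + 2) := by
  have h : ((b : ℝ) + 2) ≠ 0 := by positivity
  rw [val, val, Finset.sum_range_succ']
  have : ∑ j ∈ Finset.range k, (w (j + 1) : ℝ) / ((b : ℝ) + 2) ^ (j + 1 + 1) =
      (∑ j ∈ Finset.range k, (w (j + 1) : ℝ) / ((b : ℝ) + 2) ^ (j + 1)) / (b + 2) := by
    rw [Finset.sum_div]; congr 1; ext j; rw [pow_succ, div_div]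
  rw [this]
  field_simp
  ring

lemma sum_shift (k : ℕ) (f : ℕ → ℝ) :
    ∑ j ∈ Finset.Icc 1 k, f j = ∑ j ∈ Finset.range k, f (j + 1) := by
  induction k with
  | zero => simp
  | succ k ih => rw [Finset.sum_Icc_succ_top (by omega), Finset.sum_range_succ, ih]

lemma mem_Gb (b : ℕ) (y : ℝ) : y ∈ Gb b ↔
    ∃ k w, (∀ j < k, w j ≤ 2) ∧ w k ≤ 1 ∧ y = val b k w := by
  constructor
  · rintro ⟨k, w, hk, h1, h2, h3⟩
    obtain ⟨k, rfl⟩ : ∃ k', k = k' + 1 := ⟨k - 1, by omega⟩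
    refine ⟨k, fun j => w (j + 1), ?_, ?_, ?_⟩
    · intro j hj
      have := h1 (j + 1) (by omega) (by omega)
      simp only [mem_insert_iff, mem_singleton_iff] at this; show w (j + 1) ≤ 2; omega
    · simp only [mem_insert_iff, mem_singleton_iff] at h2; show w (k + 1) ≤ 1; omega
    · rw [h3, val, sum_shift]; rfl
  · rintro ⟨k, w, h1, h2, h3⟩
    refine ⟨k + 1, fun j => w (j - 1), by omega, ?_, ?_, ?_⟩
    · intro j hj hj'
      have := h1 (j - 1) (by omega)
      simp only [mem_insert_iff, mem_singleton_iff]; omega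
    · simp only [mem_insert_iff, mem_singleton_iff, Nat.add_sub_cancel]; omega
    · rw [h3, val, sum_shift]; simp

lemma Lab_val (b k : ℕ) : ∀ w : ℕ → ℕ, (∀ j < k, w j ≤ 2) → w k ≤ 1 → Lab b (val b k w) := by
  induction k with
  | zero =>
    intro w _ h
    have : w 0 = 0 ∨ w 0 = 1 := by omega
    rcases this with h | h
    · convert Lab.base0 using 1; simp [val, h]
    · convert Lab.base1 using 1; simp [val, h]; ring
  | succ k ih =>
    intro w h1 h2
    have := ih (fun j => w (j + 1)) (fun j hj => h1 (j + 1) (by omega)) h2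
    rw [val_succ]
    have h0 := h1 0 (by omega)
    have : w 0 = 0 ∨ w 0 = 1 ∨ w 0 = 2 := by omega
    rcases this with h | h | h
    · convert Lab.step0 _ ‹_› using 1; simp [h]
    · convert Lab.step1 _ ‹_› using 1; simp [h]; field_simp
    · convert Lab.step2 _ ‹_› using 1; simp [h]

lemma Gb_step (b : ℕ) (a : ℕ) (ha : a ≤ 2) {g : ℝ} (hg : g ∈ Gb b) :
    ((b : ℝ) + 1) / 2 * a / (b + 2) + g / (b + 2) ∈ Gb b := by
  rw [mem_Gb] at hg ⊢
  obtain ⟨k, w, h1, h2, rfl⟩ := hg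
  refine ⟨k + 1, fun j => Nat.casesOn j a w, ?_, h2, by rw [val_succ]; rfl⟩
  intro j hj
  cases j with
  | zero => exact ha
  | succ j => exact h1 j (by omega)

lemma Gb_iff (b : ℕ) (g : ℝ) : g ∈ Gb b ↔ Lab b g := by
  constructor
  · rw [mem_Gb]; rintro ⟨k, w, h1, h2, rfl⟩; exact Lab_val b k w h1 h2
  · intro h
    induction h with
    | base0 => rw [mem_Gb]; exact ⟨0, fun _ => 0, by simp, by simp, by simp [val]⟩
    | base1 => rw [mem_Gb]; exact ⟨0, fun _ => 1, by simp, by simp, by simp [val]; ring⟩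
    | step0 h _ ih => convert Gb_step b 0 (by omega) ih using 1; simp
    | step1 h _ ih => convert Gb_step b 1 (by omega) ih using 1; simp; field_simp
    | step2 h _ ih => convert Gb_step b 2 (by omega) ih using 1; simp

end labels

lemma forward {b : ℕ} (hb : 2 ≤ b) (n : ℕ) : ∀ x ∈ Icc (0 : ℝ) 2, (Rb b)^[n] x ∉ Icc (0 : ℝ) 2 →
    Lab b (Nb b x) := by
  have h2 := hbR hb
  induction n with
  | zero => intro x hx h; exact absurd hx h
  | succ n ih =>
    intro x hx h
    rw [Function.iterate_succ_apply] at h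
    by_cases hR : Rb b x ∈ Icc (0 : ℝ) 2
    · have hL := ih _ hR h
      have hJ : Rb b x ∉ Jb b := by rw [Jb_eq hb]; exact fun hK => h (hK n)
      rcases cover hb hR with (hi | hi) | hi
      · have hlt : Rb b x < 2 := lt_of_le_of_ne hR.2 fun e => hJ (by
          rw [e, Jb_eq hb]; exact two_mem_K hb)
        rw [N_b0 hb hi hlt]; exact Lab.step0 _ hL
      · rw [N_b1 hb hi hJ]; exact Lab.step1 _ (Lab_symm hL)
      · rw [N_b2 hb hi]; exact Lab.step2 _ hL
    · have h0 : x ∉ I0 b := fun h => hR ((bij0 hb).mapsTo h)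
      have h1 : x ∉ I1 b := fun h => hR ((bij1 hb).mapsTo h)
      have h3 : x ∉ I2 b := fun h => hR ((bij2 hb).mapsTo h)
      rw [mem_I0, not_and, not_le] at h0
      rw [mem_I1, not_and, not_le] at h1
      rw [mem_I2, not_and'] at h3
      have h0 := h0 hx.1
      have h3 := h3 hx.2
      rw [not_le] at h3
      rcases lt_or_ge (((b : ℝ) + 1) * x) b with hlt | hge
      · rw [N_gap1 hb h0 hlt]; exact Lab.base0
      · rw [N_gap2 hb (h1 hge) h3]; exact Lab.base1

lemma not_J {b : ℕ} (hb : 2 ≤ b) {x : ℝ} (h : Rb b x ∉ Jb b) : x ∉ Jb b := by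
  rw [Jb_eq hb, Kb_iff hb, ← Jb_eq hb]; exact h

lemma mem_Ioo_of {b : ℕ} (hb : 2 ≤ b) {x : ℝ} (h : x ∈ Icc (0 : ℝ) 2) (hJ : x ∉ Jb b) :
    x ∈ Ioo (0 : ℝ) 2 \ Jb b := by
  rw [Jb_eq hb] at *
  refine ⟨⟨lt_of_le_of_ne h.1 ?_, lt_of_le_of_ne h.2 ?_⟩, hJ⟩
  · rintro rfl; exact hJ (zero_mem_K b)
  · rintro rfl; exact hJ (two_mem_K hb)

lemma gap_not_J {b : ℕ} (hb : 2 ≤ b) {x : ℝ} (h0 : x ∉ I0 b) (h1 : x ∉ I1 b) (h2 : x ∉ I2 b) :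
    x ∉ Jb b := by
  rw [Jb_eq hb]
  intro h
  rcases cover hb (h 1) with (h | h) | h
  exacts [h0 h, h1 h, h2 h]

lemma backward {b : ℕ} (hb : 2 ≤ b) {g : ℝ} (h : Lab b g) :
    g ∈ Nb b '' (Ioo (0 : ℝ) 2 \ Jb b) ∧ 1 - g ∈ Nb b '' (Ioo (0 : ℝ) 2 \ Jb b) := by
  have h2 := hbR hb
  have B0 : ((b : ℝ) + 1) / (2 * (b + 2)) ∈ Nb b '' (Ioo (0 : ℝ) 2 \ Jb b) := by
    refine ⟨1 / 2, ⟨by constructor <;> norm_num, gap_not_J hb ?_ ?_ ?_⟩, N_gap1 hb ?_ ?_⟩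
    · rw [mem_I0]; rintro ⟨_, h⟩; linarith
    · rw [mem_I1]; rintro ⟨h, _⟩; linarith
    · rw [mem_I2]; rintro ⟨h, _⟩; linarith
    · linarith
    · linarith
  have B1 : ((b : ℝ) + 3) / (2 * (b + 2)) ∈ Nb b '' (Ioo (0 : ℝ) 2 \ Jb b) := by
    refine ⟨3 / 2, ⟨by constructor <;> norm_num, gap_not_J hb ?_ ?_ ?_⟩, N_gap2 hb ?_ ?_⟩
    · rw [mem_I0]; rintro ⟨_, h⟩; linarith
    · rw [mem_I1]; rintro ⟨_, h⟩; linarith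
    · rw [mem_I2]; rintro ⟨h, _⟩; linarith
    · linarith
    · linarith
  have S0 : ∀ h ∈ Nb b '' (Ioo (0 : ℝ) 2 \ Jb b), h / (b + 2) ∈ Nb b '' (Ioo (0 : ℝ) 2 \ Jb b) := by
    rintro _ ⟨y, ⟨hy, hJ⟩, rfl⟩
    obtain ⟨x, hx, rfl⟩ := (bij0 hb).surjOn (Ioo_subset_Icc_self hy)
    exact ⟨x, mem_Ioo_of hb (I_sub hb (.inl (.inl hx))) (not_J hb hJ), N_b0 hb hx hy.2⟩
  have S1 : ∀ h, 1 - h ∈ Nb b '' (Ioo (0 : ℝ) 2 \ Jb b) →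
      ((b : ℝ) + 1) / (2 * (b + 2)) + h / (b + 2) ∈ Nb b '' (Ioo (0 : ℝ) 2 \ Jb b) := by
    rintro h ⟨y, ⟨hy, hJ⟩, e⟩
    obtain ⟨x, hx, rfl⟩ := (bij1 hb).surjOn (Ioo_subset_Icc_self hy)
    refine ⟨x, mem_Ioo_of hb (I_sub hb (.inl (.inr hx))) (not_J hb hJ), ?_⟩
    rw [N_b1 hb hx hJ, e, sub_sub_cancel]
  have S2 : ∀ h ∈ Nb b '' (Ioo (0 : ℝ) 2 \ Jb b),
      ((b : ℝ) + 1) / (b + 2) + h / (b + 2) ∈ Nb b '' (Ioo (0 : ℝ) 2 \ Jb b) := by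
    rintro _ ⟨y, ⟨hy, hJ⟩, rfl⟩
    obtain ⟨x, hx, rfl⟩ := (bij2 hb).surjOn (Ioo_subset_Icc_self hy)
    exact ⟨x, mem_Ioo_of hb (I_sub hb (.inr hx)) (not_J hb hJ), N_b2 hb hx⟩
  induction h with
  | base0 => refine ⟨B0, ?_⟩; convert B1 using 1; field_simp; ring
  | base1 => refine ⟨B1, ?_⟩; convert B0 using 1; field_simp; ring
  | step0 h _ ih => refine ⟨S0 _ ih.1, ?_⟩; convert S2 _ ih.2 using 1; field_simp; ring
  | step1 h _ ih =>
    refine ⟨S1 _ ih.2, ?_⟩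
    convert S1 (1 - h) (by rw [sub_sub_cancel]; exact ih.1) using 1; field_simp; ring
  | step2 h _ ih => refine ⟨S2 _ ih.1, ?_⟩; convert S0 _ ih.2 using 1; field_simp; ring

/-- The set of values taken by the integrated density of states on the gaps of the
spectrum equals the gap label set: `{N_b(x) : x ∈ (0,2) \ J_b} = G_b`. -/
theorem gap_labeling (b : ℕ) (hb : 2 ≤ b) :
    Nb b '' (Ioo (0 : ℝ) 2 \ Jb b) = Gb b := by
  ext g
  rw [Gb_iff]
  refine ⟨?_, fun h => (backward hb h).1⟩
  rintro ⟨x, ⟨hx, hJ⟩, rfl⟩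
  rw [Jb_eq hb, Kb, mem_ofPred_eq, not_forall] at hJ
  obtain ⟨n, hn⟩ := hJ
  exact forward hb n x (Ioo_subset_Icc_self hx) hn
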